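/- All of the following one-sided derivatives vanish at r = 0 and at r = r₀: ∂_r p₋, ∂_r p₊, ∂_r ρ₋, ∂_r ρ₊, ∂_r q₊, ∂_r (M₋²), ∂_r (M₊²), ∂_r s₋, and ∂_r s₊. (First part of Lemma 3.1 of the paper.) -/

import Mathlib

open Filter Topology in
theorem aux_sing (F u : ℝ → ℝ) (s : Set ℝ) (x : ℝ) (hF0 : F 0 = 0)
    (hF : ∀ᶠ y in 𝓝[≠] (0:ℝ), 1 ≤ |F y|) (hu : ContinuousWithinAt u s x) (hux : u x = 0) :
    derivWithin (fun r => F (u r)) s x = 0 := by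
  by_cases hd : DifferentiableWithinAt ℝ (fun r => F (u r)) s x
  · have hc := hd.continuousWithinAt
    have e1 : ∀ᶠ r in 𝓝[s] x, |F (u r)| < 1 := by
      have := hc.abs
      refine this.eventually_lt (continuousWithinAt_const (b := (1:ℝ))) ?_
      simp [hux, hF0]
    have e2 : ∀ᶠ r in 𝓝[s] x, u r ≠ 0 → 1 ≤ |F (u r)| := by
      have h := eventually_nhdsWithin_iff.1 hF
      have hu' : Tendsto u (𝓝[s] x) (𝓝 0) := by simpa [ContinuousWithinAt, hux] using hu
      exact hu'.eventually h
    have e3 : (fun r => F (u r)) =ᶠ[𝓝[s] x] fun _ => (0:ℝ) := by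
      filter_upwards [e1, e2] with r h1 h2
      by_cases h : u r = 0
      · simp [h, hF0]
      · exact absurd (h2 h) (not_le.2 h1)
    rw [e3.derivWithin_eq (by simp [hux, hF0])]
    simp
  · exact derivWithin_zero_of_not_differentiableWithinAt hd

theorem aux_end (f G w : ℝ → ℝ) (r₀ : ℝ) (hr₀ : 0 < r₀)
    (hf : ContDiffOn ℝ 2 f (Set.Icc 0 r₀))
    (hG : DifferentiableWithinAt ℝ G (Set.Icc 0 r₀) 0)
    (hw : DifferentiableWithinAt ℝ w (Set.Icc 0 r₀) 0)
    (h : ∀ r ∈ Set.Icc (0:ℝ) r₀, r * derivWithin f (Set.Icc 0 r₀) r = G r * w r ^ 2)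
    (h3 : w 0 = 0) (h3' : w r₀ = 0) (x : ℝ) (hx : x ∈ ({0, r₀} : Set ℝ)) :
    derivWithin f (Set.Icc 0 r₀) x = 0 := by
  rcases hx with rfl | hx
  · have m0 : (0:ℝ) ∈ Set.Icc 0 r₀ := ⟨le_rfl, hr₀.le⟩
    have hU := uniqueDiffOn_Icc hr₀
    have hd : DifferentiableOn ℝ (derivWithin f (Set.Icc 0 r₀)) (Set.Icc 0 r₀) :=
      (hf.derivWithin (m := 1) hU (by norm_num)).differentiableOn (by norm_num)
    have a := (hasDerivWithinAt_id (0:ℝ) (Set.Icc 0 r₀)).mul (hd 0 m0).hasDerivWithinAt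
    have b := hG.hasDerivWithinAt.mul (hw.hasDerivWithinAt.pow 2)
    have c := a.congr (f₁ := G * w ^ 2) (fun r hr => by simpa using (h r hr).symm)
      (by simpa using (h 0 m0).symm)
    have := (hU 0 m0).eq_deriv _ c b
    simpa [h3] using this
  · rw [Set.mem_singleton_iff] at hx
    subst hx
    have := h x ⟨hr₀.le, le_rfl⟩
    simpa [h3', hr₀.ne'] using this

theorem aux_mul (f g : ℝ → ℝ) (s : Set ℝ) (x : ℝ) (hf : HasDerivWithinAt f 0 s x)
    (hg : HasDerivWithinAt g 0 s x) : HasDerivWithinAt (fun r => f r * g r) 0 s x := by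
  have := hf.mul hg
  simp only [zero_mul, mul_zero, add_zero] at this
  exact this

theorem aux_div (f g : ℝ → ℝ) (s : Set ℝ) (x : ℝ) (hf : HasDerivWithinAt f 0 s x)
    (hg : HasDerivWithinAt g 0 s x) (h : g x ≠ 0) :
    HasDerivWithinAt (fun r => f r / g r) 0 s x := by
  have := hf.div hg h
  simp only [zero_mul, mul_zero, sub_zero, zero_div] at this
  exact this

open Filter Topology in
theorem aux_M (P R Q : ℝ → ℝ) (γ : ℝ) (hγ : 0 < γ) (s : Set ℝ) (x : ℝ)
    (hU : UniqueDiffWithinAt ℝ s x) (hP : HasDerivWithinAt P 0 s x)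
    (hR : HasDerivWithinAt R 0 s x) (hQ : HasDerivWithinAt Q 0 s x)
    (hR0 : 0 < R x) (hQ0 : 0 < Q x) :
    derivWithin (fun r => R r * Q r ^ 2 / (γ * P r)) s x = 0 := by
  have hQ2 : HasDerivWithinAt (fun r => Q r ^ 2) 0 s x := by
    simpa [sq] using aux_mul _ _ _ _ hQ hQ
  have hN := aux_mul _ _ _ _ hR hQ2
  have hD := aux_mul _ _ _ _ (hasDerivWithinAt_const x s γ) hP
  by_cases h : P x = 0
  · have hu := aux_div _ _ _ _ hD hN (by positivity)
    have := aux_sing (fun y => y⁻¹) _ s x (by simp) ?_ hu.continuousWithinAt (by simp [h])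
    · simpa only [inv_div] using this
    · exact (tendsto_norm_inv_nhdsNE_zero_atTop (α := ℝ)).eventually_ge_atTop 1 |>.mono
        fun y hy => by simpa using hy
  · exact (aux_div _ _ _ _ hN hD (mul_ne_zero hγ.ne' h)).derivWithin hU

open Filter Topology in
theorem aux_s (P R : ℝ → ℝ) (γ A cv : ℝ) (hA : 0 < A) (hcv : 0 < cv) (s : Set ℝ) (x : ℝ)
    (hU : UniqueDiffWithinAt ℝ s x) (hP : HasDerivWithinAt P 0 s x)
    (hR : HasDerivWithinAt R 0 s x) (hR0 : 0 < R x) :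
    derivWithin (fun r => cv * Real.log (P r / (A * R r ^ γ))) s x = 0 := by
  have hRγ : HasDerivWithinAt (fun r => R r ^ γ) 0 s x := by
    simpa using hR.rpow_const (p := γ) (Or.inl hR0.ne')
  have hpos : 0 < R x ^ γ := Real.rpow_pos_of_pos hR0 γ
  have hu := aux_div _ _ _ _ hP (aux_mul _ _ _ _ (hasDerivWithinAt_const x s A) hRγ)
    (by positivity)
  by_cases h : P x = 0
  · refine aux_sing (fun y => cv * Real.log y) _ s x (by simp) ?_ hu.continuousWithinAt
      (by simp [h])
    have h1 := (Real.tendsto_log_nhdsNE_zero.const_mul_atBot hcv).eventually_le_atBot (-1)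
    exact h1.mono fun y hy => by rw [abs_of_nonpos (by linarith)]; linarith
  · have hl := hu.log (div_ne_zero h (by positivity))
    rw [zero_div] at hl
    exact (aux_mul _ _ _ _ (hasDerivWithinAt_const x s cv) hl).derivWithin hU


/-- First part of Lemma 3.1: the one-sided radial derivatives of
`p₋, p₊, ρ₋, ρ₊, q₊, M₋², M₊², s₋, s₊` vanish at `r = 0` and `r = r₀`. -/
theorem stmt_6 (γ μ2 A cv r₀ : ℝ) (hγ : 1 < γ) (hμ2 : μ2 = (γ - 1) / (γ + 1))
    (hA : 0 < A) (hcv : 0 < cv) (hr₀ : 0 < r₀)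
    (pm ρm qm wm c2m M2m pp qp ρp wp M2p sm sp : ℝ → ℝ)
    (hpm : ContDiffOn ℝ 2 pm (Set.Icc 0 r₀))
    (hρm : ContDiffOn ℝ 2 ρm (Set.Icc 0 r₀))
    (hqm : ContDiffOn ℝ 2 qm (Set.Icc 0 r₀))
    (hwm : ContDiffOn ℝ 2 wm (Set.Icc 0 r₀))
    (hpm_pos : ∀ r ∈ Set.Icc (0:ℝ) r₀, 0 < pm r)
    (hρm_pos : ∀ r ∈ Set.Icc (0:ℝ) r₀, 0 < ρm r)
    (hqm_pos : ∀ r ∈ Set.Icc (0:ℝ) r₀, 0 < qm r)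
    (hc2m : ∀ r, c2m r = γ * pm r / ρm r)
    (hM2m : ∀ r, M2m r = ρm r * (qm r) ^ 2 / (γ * pm r))
    (hpp : ∀ r, pp r = ((1 + μ2) * M2m r - μ2) * pm r)
    (hqp : ∀ r, qp r = μ2 * (qm r + (2 / (γ - 1)) * c2m r / qm r))
    (hρp : ∀ r, ρp r = ρm r * qm r / qp r)
    (hwp : ∀ r, wp r = wm r)
    (hM2p : ∀ r, M2p r = ρp r * (qp r) ^ 2 / (γ * pp r))
    (hsm : ∀ r, sm r = cv * Real.log (pm r / (A * ρm r ^ γ)))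
    (hsp : ∀ r, sp r = cv * Real.log (pp r / (A * ρp r ^ γ)))
    (h1 : ∀ r ∈ Set.Icc (0:ℝ) r₀,
      r * derivWithin pm (Set.Icc 0 r₀) r = ρm r * (wm r) ^ 2)
    (h2 : ∀ r ∈ Set.Icc (0:ℝ) r₀,
      r * derivWithin (fun s => 1 / M2m s) (Set.Icc 0 r₀) r =
        ((γ - 1) * (wm r) ^ 2 / (4 * (qm r) ^ 2)) *
          ((γ + 1) ^ 2 / (γ - 1 + 2 / M2m r) - (γ - 1 + 2 / M2m r)))
    (h3 : wm 0 = 0) (h3' : wm r₀ = 0)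
    (h4 : derivWithin qm (Set.Icc 0 r₀) 0 = 0)
    (h4' : derivWithin qm (Set.Icc 0 r₀) r₀ = 0) :
    ∀ x ∈ ({0, r₀} : Set ℝ),
      derivWithin pm (Set.Icc 0 r₀) x = 0 ∧
      derivWithin pp (Set.Icc 0 r₀) x = 0 ∧
      derivWithin ρm (Set.Icc 0 r₀) x = 0 ∧
      derivWithin ρp (Set.Icc 0 r₀) x = 0 ∧
      derivWithin qp (Set.Icc 0 r₀) x = 0 ∧
      derivWithin M2m (Set.Icc 0 r₀) x = 0 ∧
      derivWithin M2p (Set.Icc 0 r₀) x = 0 ∧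
      derivWithin sm (Set.Icc 0 r₀) x = 0 ∧
      derivWithin sp (Set.Icc 0 r₀) x = 0 := by
  obtain rfl : c2m = _ := funext hc2m
  obtain rfl : M2m = _ := funext hM2m
  obtain rfl : pp = _ := funext hpp
  obtain rfl : qp = _ := funext hqp
  obtain rfl : ρp = _ := funext hρp
  obtain rfl : M2p = _ := funext hM2p
  obtain rfl : sm = _ := funext hsm
  obtain rfl : sp = _ := funext hsp
  clear hc2m hM2m hpp hqp hρp hM2p hsm hsp
  have hγ0 : 0 < γ := by linarith
  have hγ1 : 0 < γ - 1 := by linarith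
  have hμ : 0 < μ2 := by rw [hμ2]; positivity
  have m0 : (0:ℝ) ∈ Set.Icc 0 r₀ := ⟨le_rfl, hr₀.le⟩
  have dρ := (hρm.differentiableOn (by norm_num)) 0 m0
  have dq := (hqm.differentiableOn (by norm_num)) 0 m0
  have dp := (hpm.differentiableOn (by norm_num)) 0 m0
  have dw := (hwm.differentiableOn (by norm_num)) 0 m0
  have hfC : ContDiffOn ℝ 2 (fun s => 1 / (ρm s * (qm s) ^ 2 / (γ * pm s))) (Set.Icc 0 r₀) := by
    refine contDiffOn_const.div ((hρm.mul (hqm.pow 2)).div (contDiffOn_const.mul hpm) ?_) ?_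
    · intro r hr
      have := hpm_pos r hr
      positivity
    · intro r hr
      have := hpm_pos r hr
      have := hρm_pos r hr
      have := hqm_pos r hr
      positivity
  have df := (hfC.differentiableOn (by norm_num)) 0 m0
  intro x hx
  have hxm : x ∈ Set.Icc 0 r₀ := by
    rcases hx with rfl | hx
    · exact m0
    · rw [Set.mem_singleton_iff] at hx
      rw [hx]; exact ⟨hr₀.le, le_rfl⟩
  have P0 : derivWithin pm (Set.Icc 0 r₀) x = 0 :=
    aux_end pm ρm wm r₀ hr₀ hpm dρ dw h1 h3 h3' x hx
  have F0 := aux_end _ (fun r => (γ - 1) / (4 * (qm r) ^ 2) *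
      ((γ + 1) ^ 2 / (γ - 1 + 2 * (1 / (ρm r * (qm r) ^ 2 / (γ * pm r)))) -
        (γ - 1 + 2 * (1 / (ρm r * (qm r) ^ 2 / (γ * pm r)))))) wm r₀ hr₀ hfC
    (by
      have a1 := hpm_pos 0 m0
      have a2 := hρm_pos 0 m0
      have a3 := hqm_pos 0 m0
      have d1 := (df.const_mul 2).const_add (γ - 1)
      refine ((differentiableWithinAt_const _).div ((dq.pow 2).const_mul 4) ?_).mul
        (((differentiableWithinAt_const _).div d1 ?_).sub d1)
      · simp only [Pi.pow_apply]; positivity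
      · positivity) dw
    (fun r hr => by rw [h2 r hr]; ring) h3 h3' x hx
  have Q0 : derivWithin qm (Set.Icc 0 r₀) x = 0 := by
    rcases hx with rfl | hx
    · exact h4
    · rw [Set.mem_singleton_iff] at hx
      rw [hx, h4']
  have a1 := hpm_pos x hxm
  have a2 := hρm_pos x hxm
  have a3 := hqm_pos x hxm
  have Hp : HasDerivWithinAt pm 0 (Set.Icc 0 r₀) x := by
    have h := ((hpm.differentiableOn (by norm_num)) x hxm).hasDerivWithinAt
    rwa [P0] at h
  have Hq : HasDerivWithinAt qm 0 (Set.Icc 0 r₀) x := by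
    have h := ((hqm.differentiableOn (by norm_num)) x hxm).hasDerivWithinAt
    rwa [Q0] at h
  have Hf : HasDerivWithinAt (fun s => 1 / (ρm s * (qm s) ^ 2 / (γ * pm s))) 0
      (Set.Icc 0 r₀) x := by
    have := ((hfC.differentiableOn (by norm_num)) x hxm).hasDerivWithinAt
    rwa [F0] at this
  have HM : HasDerivWithinAt (fun s => ρm s * (qm s) ^ 2 / (γ * pm s)) 0 (Set.Icc 0 r₀) x := by
    have := aux_div _ _ _ _ (hasDerivWithinAt_const x (Set.Icc 0 r₀) (1:ℝ)) Hf (by positivity)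
    simpa using this
  have Hγp := aux_mul _ _ _ _ (hasDerivWithinAt_const x (Set.Icc 0 r₀) γ) Hp
  have Hq2 : HasDerivWithinAt (fun r => qm r ^ 2) 0 (Set.Icc 0 r₀) x := by
    simpa [sq] using aux_mul _ _ _ _ Hq Hq
  have Hρ : HasDerivWithinAt ρm 0 (Set.Icc 0 r₀) x := by
    have := aux_div _ _ _ _ (aux_mul _ _ _ _ HM Hγp) Hq2 (by positivity)
    refine this.congr_of_mem (fun r hr => ?_) hxm
    have := hpm_pos r hr
    have := hqm_pos r hr
    field_simp
  have Hpp := aux_mul _ _ _ _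
    ((aux_mul _ _ _ _ (hasDerivWithinAt_const x (Set.Icc 0 r₀) (1 + μ2)) HM).sub_const μ2) Hp
  have Hc := aux_div _ _ _ _ Hγp Hρ a2.ne'
  have Hqp : HasDerivWithinAt
      (fun r => μ2 * (qm r + (2 / (γ - 1)) * (γ * pm r / ρm r) / qm r)) 0 (Set.Icc 0 r₀) x := by
    have h := Hq.add (aux_div _ _ _ _ (aux_mul _ _ _ _
      (hasDerivWithinAt_const x (Set.Icc 0 r₀) (2 / (γ - 1))) Hc) Hq a3.ne')
    rw [add_zero] at h
    exact aux_mul _ _ _ _ (hasDerivWithinAt_const x (Set.Icc 0 r₀) μ2) h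
  have b1 : 0 < μ2 * (qm x + (2 / (γ - 1)) * (γ * pm x / ρm x) / qm x) := by positivity
  have Hρp := aux_div _ _ _ _ (aux_mul _ _ _ _ Hρ Hq) Hqp b1.ne'
  have b2 : 0 < ρm x * qm x / (μ2 * (qm x + (2 / (γ - 1)) * (γ * pm x / ρm x) / qm x)) := by
    positivity
  have hU := uniqueDiffOn_Icc hr₀ x hxm
  refine ⟨P0, Hpp.derivWithin hU, Hρ.derivWithin hU, Hρp.derivWithin hU, Hqp.derivWithin hU,
    HM.derivWithin hU, ?_, ?_, ?_⟩
  · exact aux_M _ _ _ γ hγ0 _ x hU Hpp Hρp Hqp b2 b1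
  · exact aux_s pm ρm γ A cv hA hcv _ x hU Hp Hρ a2
  · exact aux_s _ _ γ A cv hA hcv _ x hU Hpp Hρp b2
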